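/- Fix an integer N ≥ 2, t ∈ [0,1], n ≥ 1 and x ∈ [0,1]. Then ρ^t_N({y ∈ [0,1] : R_N^n(y) < x}) = ∫_{[0,1]} Nx/(N − (1−x)(1−s^t_{N,n}(y))) dρ^t_N(y), where s^t_{N,n}(y) is the random variable defined from the digits of y by s^t_{N,0}(y) = t and s^t_{N,k}(y) = 1 − N/(a_k(y) + s^t_{N,k−1}(y)). -/

import Mathlib

open MeasureTheory Set Real Filter

/-- The Rényi-type continued fraction map `R_N`. -/
noncomputable def RN (N : ℕ) (x : ℝ) : ℝ :=
  if x = 1 then 0 else (N : ℝ) / (1 - x) - ⌊(N : ℝ) / (1 - x)⌋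

/-- `digit N k x` is the `(k+1)`-st digit `a_{k+1}(x)`. -/
noncomputable def digit (N k : ℕ) (x : ℝ) : ℤ :=
  ⌊(N : ℝ) / (1 - (RN N)^[k] x)⌋

/-- The conditional probability measure `ρ^t_N`, with density
`N(N-1+t)/[N-(1-x)(1-t)]²` on `[0,1]`. -/
noncomputable def rhoT (N : ℕ) (t : ℝ) : Measure ℝ :=
  (volume.restrict (Set.Icc (0 : ℝ) 1)).withDensity fun x =>
    ENNReal.ofReal ((N : ℝ) * ((N : ℝ) - 1 + t) / ((N : ℝ) - (1 - x) * (1 - t)) ^ 2)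

/-- `s^t_{N,k}(y)` built from the digits of `y`. -/
noncomputable def sVar (N : ℕ) (t y : ℝ) : ℕ → ℝ
  | 0 => t
  | k + 1 => 1 - (N : ℝ) / ((digit N k y : ℝ) + sVar N t y k)

/-! The recursion for `s^t_{N,k}` applies the inverse branch `u ↦ 1 - N / (a + u)` of `R_N` indexed
by the current digit `a`. Pulling the density of `ρ^t_N` back along that branch gives a constant
multiple of the density of `ρ^s_N` with `s = 1 - N / (a + t)`. Hence, given that the first digit of
`y` is `a`, the law of `R_N y` under `ρ^t_N` is `ρ^s_N`, and by induction the law of `R_N^n y` given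
the first `n` digits of `y` is `ρ^s_N` with `s = s^t_{N,n}(y)`. Averaging the distribution functions
of these laws over `y` gives the formula. -/

section Branches

variable {N : ℕ} {a : ℤ} {u y : ℝ}

/-- The inverse branch `u ↦ 1 - N / (a + u)` of `R_N` onto the points with first digit `a`. The
same map drives the recursion for `s^t_{N,k}`, where `a` is the digit read at step `k`. -/
noncomputable def invBranch (N : ℕ) (a : ℤ) (u : ℝ) : ℝ := 1 - (N : ℝ) / (a + u)

lemma sVar_succ (N : ℕ) (t y : ℝ) (k : ℕ) :
    sVar N t y (k + 1) = invBranch N (digit N k y) (sVar N t y k) := rfl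

lemma digit_succ (N k : ℕ) (y : ℝ) : digit N (k + 1) y = digit N k (RN N y) := rfl

-- The separate case `x = 1` of `RN` agrees with the junk value `N / 0 = 0`.
lemma RN_eq_fract (N : ℕ) (x : ℝ) : RN N x = Int.fract ((N : ℝ) / (1 - x)) := by
  unfold RN
  split_ifs with hx
  · simp [hx]
  · rfl

lemma RN_mem_Ico (N : ℕ) (y : ℝ) : RN N y ∈ Ico (0 : ℝ) 1 := by
  rw [RN_eq_fract]
  exact ⟨Int.fract_nonneg _, Int.fract_lt_one _⟩

lemma iterate_RN_mem_Ico (hy : y ∈ Ico (0 : ℝ) 1) (n : ℕ) : (RN N)^[n] y ∈ Ico (0 : ℝ) 1 :=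
  MapsTo.iterate (fun z _ ↦ RN_mem_Ico N z) n hy

lemma measurable_RN (N : ℕ) : Measurable (RN N) := by
  rw [funext (RN_eq_fract N)]
  fun_prop

lemma measurable_digit (N k : ℕ) : Measurable (digit N k) :=
  Int.measurable_floor.comp
    (measurable_const.div (measurable_const.sub ((measurable_RN N).iterate k)))

lemma measurable_sVar (N : ℕ) (t : ℝ) (n : ℕ) : Measurable fun y ↦ sVar N t y n := by
  induction n with
  | zero => exact measurable_const
  | succ n ih =>
    have hdigit : Measurable fun y ↦ (digit N n y : ℝ) :=
      measurable_from_top.comp (measurable_digit N n)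
    exact measurable_const.sub (measurable_const.div (hdigit.add ih))

lemma le_digit (hy : y ∈ Ico (0 : ℝ) 1) (k : ℕ) : (N : ℤ) ≤ digit N k y := by
  obtain ⟨h0, h1⟩ := iterate_RN_mem_Ico (N := N) hy k
  rw [digit, Int.le_floor, Int.cast_natCast]
  exact le_div_self N.cast_nonneg (by linarith) (by linarith)

lemma div_one_sub_invBranch (hN : 0 < N) (a : ℤ) (u : ℝ) :
    (N : ℝ) / (1 - invBranch N a u) = a + u := by
  rw [invBranch, sub_sub_cancel, div_div_cancel₀ (by positivity)]

lemma digit_zero_invBranch (hN : 0 < N) (a : ℤ) (hu : u ∈ Ico (0 : ℝ) 1) :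
    digit N 0 (invBranch N a u) = a := by
  rw [digit, Function.iterate_zero_apply, div_one_sub_invBranch hN, Int.floor_intCast_add,
    Int.floor_eq_zero_iff.2 hu, add_zero]

lemma RN_invBranch (hN : 0 < N) (a : ℤ) (hu : u ∈ Ico (0 : ℝ) 1) :
    RN N (invBranch N a u) = u := by
  rw [RN_eq_fract, div_one_sub_invBranch hN, Int.fract_intCast_add, Int.fract_eq_self.2 hu]

lemma invBranch_digit_zero_RN (hN : 0 < N) (y : ℝ) :
    invBranch N (digit N 0 y) (RN N y) = y := by
  rw [invBranch, RN_eq_fract, digit, Function.iterate_zero_apply, Int.floor_add_fract,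
    div_div_cancel₀ (by positivity), sub_sub_cancel]

lemma injOn_invBranch (hN : 0 < N) (a : ℤ) : InjOn (invBranch N a) (Ico 0 1) :=
  LeftInvOn.injOn fun _ ↦ RN_invBranch hN a

lemma invBranch_mem_Ico (hN : 0 < N) (ha : (N : ℤ) ≤ a) (hu : 0 ≤ u) :
    invBranch N a u ∈ Ico (0 : ℝ) 1 := by
  have hN' : (0 : ℝ) < N := by exact_mod_cast hN
  have ha' : (N : ℝ) ≤ a := by exact_mod_cast ha
  have hpos : 0 < (a : ℝ) + u := by linarith
  refine ⟨sub_nonneg.2 ((div_le_one hpos).2 (by linarith)), sub_lt_self _ (div_pos hN' hpos)⟩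

lemma image_invBranch_Ico (hN : 0 < N) (ha : (N : ℤ) ≤ a) :
    invBranch N a '' Ico (0 : ℝ) 1 = {y ∈ Ico (0 : ℝ) 1 | digit N 0 y = a} := by
  ext y
  constructor
  · rintro ⟨u, hu, rfl⟩
    exact ⟨invBranch_mem_Ico hN ha hu.1, digit_zero_invBranch hN a hu⟩
  · rintro ⟨-, rfl⟩
    exact ⟨RN N y, RN_mem_Ico N y, invBranch_digit_zero_RN hN y⟩

lemma iUnion_image_invBranch (hN : 0 < N) :
    ⋃ a : Ici (N : ℤ), invBranch N a '' Ico (0 : ℝ) 1 = Ico 0 1 := by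
  have himage (a : Ici (N : ℤ)) := image_invBranch_Ico hN a.2
  ext y
  simp only [himage, mem_iUnion]
  exact ⟨fun ⟨_, hy, _⟩ ↦ hy, fun hy ↦ ⟨⟨digit N 0 y, le_digit hy 0⟩, hy, rfl⟩⟩

lemma pairwise_disjoint_image_invBranch (hN : 0 < N) :
    Pairwise (Function.onFun Disjoint fun a : Ici (N : ℤ) ↦ invBranch N a '' Ico (0 : ℝ) 1) := by
  intro a b hab
  simp only [Function.onFun, image_invBranch_Ico hN a.2, image_invBranch_Ico hN b.2]
  exact disjoint_left.2 fun y hya hyb ↦ hab (Subtype.ext (hya.2.symm.trans hyb.2))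

lemma measurableSet_image_invBranch (hN : 0 < N) (ha : (N : ℤ) ≤ a) :
    MeasurableSet (invBranch N a '' Ico (0 : ℝ) 1) := by
  rw [image_invBranch_Ico hN ha]
  exact measurableSet_Ico.inter (measurable_digit N 0 (measurableSet_singleton a))

lemma hasDerivAt_invBranch (N : ℕ) (hau : (a : ℝ) + u ≠ 0) :
    HasDerivAt (invBranch N a) ((N : ℝ) / (a + u) ^ 2) u := by
  have hquot := (hasDerivAt_const u (N : ℝ)).div ((hasDerivAt_id' u).const_add (a : ℝ)) hau
  exact (hquot.const_sub 1).congr_deriv (by ring)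

lemma one_sub_lt_invBranch (hN : 0 < N) (ha : (N : ℤ) ≤ a) (hu : 1 - (N : ℝ) < u) :
    1 - (N : ℝ) < invBranch N a u := by
  have hN' : (0 : ℝ) < N := by exact_mod_cast hN
  have ha' : (N : ℝ) ≤ a := by exact_mod_cast ha
  exact sub_lt_sub_left (div_lt_self hN' (by linarith)) 1

lemma one_sub_lt_sVar {t : ℝ} (hN : 0 < N) (ht : 1 - (N : ℝ) < t) (hy : y ∈ Ico (0 : ℝ) 1)
    (n : ℕ) : 1 - (N : ℝ) < sVar N t y n := by
  induction n with
  | zero => exact ht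
  | succ n ih => exact one_sub_lt_invBranch hN (le_digit hy n) ih

lemma sVar_invBranch_succ (hN : 0 < N) (t : ℝ) (a : ℤ) (hu : u ∈ Ico (0 : ℝ) 1) (n : ℕ) :
    sVar N t (invBranch N a u) (n + 1) = sVar N (invBranch N a t) u n := by
  induction n with
  | zero => rw [sVar_succ, digit_zero_invBranch hN a hu, sVar, sVar]
  | succ n ih => rw [sVar_succ, ih, digit_succ, RN_invBranch hN a hu, sVar_succ]

-- Apart from the denominator the right side is symmetric in `u` and `v`; this is what lets `R_N`
-- trade the point `invBranch N a u` for the parameter `invBranch N a v`.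
lemma sub_one_sub_invBranch_mul_one_sub (N : ℕ) (hau : (a : ℝ) + u ≠ 0) (v : ℝ) :
    (N : ℝ) - (1 - invBranch N a u) * (1 - v) = N * (a - 1 + u + v) / (a + u) := by
  unfold invBranch
  field_simp
  ring

end Branches

section ConditionalMeasure

open scoped ENNReal

variable {N : ℕ} {t x : ℝ}

/-- The density of `ρ^t_N` on `[0,1]`, as a real-valued function on the whole line. -/
noncomputable def rhoDensity (N : ℕ) (t x : ℝ) : ℝ :=
  (N : ℝ) * ((N : ℝ) - 1 + t) / ((N : ℝ) - (1 - x) * (1 - t)) ^ 2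

/-- The probability under `ρ^t_N` that the first digit is `a`. -/
noncomputable def digitWeight (N : ℕ) (t : ℝ) (a : ℤ) : ℝ :=
  ((N : ℝ) - 1 + t) / (((a : ℝ) - 1 + t) * (a + t))

lemma measurable_rhoDensity (N : ℕ) (t : ℝ) : Measurable (rhoDensity N t) := by
  unfold rhoDensity
  fun_prop

lemma rhoDensity_nonneg (ht : 1 - (N : ℝ) < t) (x : ℝ) : 0 ≤ rhoDensity N t x := by
  have : 0 < (N : ℝ) - 1 + t := by linarith
  unfold rhoDensity
  positivity

lemma digitWeight_nonneg {a : ℤ} (ht : 1 - (N : ℝ) < t) (ha : (N : ℤ) ≤ a) :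
    0 ≤ digitWeight N t a := by
  have ha' : (N : ℝ) ≤ a := by exact_mod_cast ha
  exact div_nonneg (by linarith) (mul_nonneg (by linarith) (by linarith))

lemma sub_one_sub_mul_one_sub_pos (hN : 0 < N) (ht : 1 - (N : ℝ) < t) (hx : x ∈ Icc (0 : ℝ) 1) :
    0 < (N : ℝ) - (1 - x) * (1 - t) := by
  have hN' : (0 : ℝ) < N := by exact_mod_cast hN
  have hconvex : (N : ℝ) - (1 - x) * (1 - t) = (1 - x) * (N - 1 + t) + x * N := by ring
  rw [hconvex]
  rcases hx.1.eq_or_lt with rfl | hx0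
  · linarith
  · exact add_pos_of_nonneg_of_pos (mul_nonneg (by linarith [hx.2]) (by linarith))
      (mul_pos hx0 hN')

lemma rhoDensity_invBranch {a : ℤ} {u : ℝ} (hN : 0 < N) (ht : 1 - (N : ℝ) < t)
    (ha : (N : ℤ) ≤ a) (hu : 0 ≤ u) :
    (N : ℝ) / (a + u) ^ 2 * rhoDensity N t (invBranch N a u)
      = digitWeight N t a * rhoDensity N (invBranch N a t) u := by
  have hN' : (1 : ℝ) ≤ N := by exact_mod_cast hN
  have ha' : (N : ℝ) ≤ a := by exact_mod_cast ha
  have hau : (a : ℝ) + u ≠ 0 := by linarith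
  have hat : (a : ℝ) + t ≠ 0 := by linarith
  have hat' : (a : ℝ) - 1 + t ≠ 0 := by linarith
  have hnum : (N : ℝ) - 1 + invBranch N a t = N * (a - 1 + t) / (a + t) := by
    unfold invBranch
    field_simp
    ring
  rw [rhoDensity, rhoDensity, digitWeight, hnum, mul_comm (1 - u),
    sub_one_sub_invBranch_mul_one_sub N hau, sub_one_sub_invBranch_mul_one_sub N hat,
    add_right_comm _ t u]
  field_simp

lemma hasDerivAt_rhoT_cdf (h : (N : ℝ) - (1 - x) * (1 - t) ≠ 0) :
    HasDerivAt (fun y ↦ (N : ℝ) * y / (N - (1 - y) * (1 - t))) (rhoDensity N t x) x := by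
  have hnum : HasDerivAt (fun y ↦ (N : ℝ) * y) (N * 1) x := (hasDerivAt_id' x).const_mul _
  have hden : HasDerivAt (fun y ↦ (N : ℝ) - (1 - y) * (1 - t)) (-(-1 * (1 - t))) x :=
    (((hasDerivAt_id' x).const_sub 1).mul_const (1 - t)).const_sub _
  refine (hnum.div hden h).congr_deriv ?_
  rw [rhoDensity]
  ring

lemma ae_rhoT_mem_Ico (N : ℕ) (t : ℝ) : ∀ᵐ y ∂rhoT N t, y ∈ Ico (0 : ℝ) 1 := by
  refine (withDensity_absolutelyContinuous _ _).ae_le ?_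
  rw [Measure.restrict_congr_set Ico_ae_eq_Icc.symm]
  exact ae_restrict_mem measurableSet_Ico

lemma rhoT_Iio (hN : 0 < N) (ht : 1 - (N : ℝ) < t) (hx : x ∈ Icc (0 : ℝ) 1) :
    rhoT N t (Iio x) = ENNReal.ofReal ((N : ℝ) * x / (N - (1 - x) * (1 - t))) := by
  have hden : ∀ y ∈ Icc 0 x, (N : ℝ) - (1 - y) * (1 - t) ≠ 0 := fun y hy ↦
    (sub_one_sub_mul_one_sub_pos hN ht ⟨hy.1, hy.2.trans hx.2⟩).ne'
  have hcont : ContinuousOn (rhoDensity N t) (Icc 0 x) :=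
    ContinuousOn.div (by fun_prop) (by fun_prop) fun y hy ↦ pow_ne_zero 2 (hden y hy)
  have hset : Iio x ∩ Icc 0 1 = Ico 0 x := by
    ext y
    exact ⟨fun h ↦ ⟨h.2.1, h.1⟩, fun h ↦ ⟨h.2, h.1, h.2.le.trans hx.2⟩⟩
  have hintegral : ∫ y in 0..x, rhoDensity N t y = (N : ℝ) * x / (N - (1 - x) * (1 - t)) := by
    rw [← uIcc_of_le hx.1] at hden hcont
    rw [intervalIntegral.integral_eq_sub_of_hasDerivAt
      (fun y hy ↦ hasDerivAt_rhoT_cdf (hden y hy)) hcont.intervalIntegrable]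
    simp
  calc rhoT N t (Iio x)
      = ∫⁻ y in Ioc 0 x, ENNReal.ofReal (rhoDensity N t y) := by
        rw [rhoT, withDensity_apply _ measurableSet_Iio,
          Measure.restrict_restrict measurableSet_Iio, hset,
          Measure.restrict_congr_set Ico_ae_eq_Ioc]
        rfl
    _ = ENNReal.ofReal (∫ y in 0..x, rhoDensity N t y) := by
        rw [intervalIntegral.integral_of_le hx.1, ofReal_integral_eq_lintegral_ofReal
          (hcont.integrableOn_Icc.mono_set Ioc_subset_Icc_self)
          (ae_of_all _ (rhoDensity_nonneg ht))]
    _ = _ := by rw [hintegral]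

lemma isProbabilityMeasure_rhoT (hN : 0 < N) (ht : 1 - (N : ℝ) < t) :
    IsProbabilityMeasure (rhoT N t) := by
  have hN' : (N : ℝ) ≠ 0 := by positivity
  have hIio : Iio 1 =ᵐ[rhoT N t] univ := by
    filter_upwards [ae_rhoT_mem_Ico N t] with y hy using eq_true hy.2
  refine ⟨?_⟩
  rw [← measure_congr hIio, rhoT_Iio hN ht (right_mem_Icc.2 zero_le_one)]
  simp [hN']

lemma lintegral_rhoT (N : ℕ) (t : ℝ) (f : ℝ → ℝ≥0∞) :
    ∫⁻ y, f y ∂rhoT N t = ∫⁻ y in Ico (0 : ℝ) 1, ENNReal.ofReal (rhoDensity N t y) * f y := by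
  rw [Measure.restrict_congr_set Ico_ae_eq_Icc]
  exact lintegral_withDensity_eq_lintegral_mul_non_measurable _
    (measurable_rhoDensity N t).ennreal_ofReal (ae_of_all _ fun _ ↦ ENNReal.ofReal_lt_top) f

lemma lintegral_rhoT_eq_tsum (hN : 0 < N) (ht : 1 - (N : ℝ) < t) (f : ℝ → ℝ≥0∞) :
    ∫⁻ y, f y ∂rhoT N t = ∑' a : Ici (N : ℤ), ENNReal.ofReal (digitWeight N t a) *
      ∫⁻ u, f (invBranch N a u) ∂rhoT N (invBranch N a t) := by
  rw [lintegral_rhoT, ← iUnion_image_invBranch hN, lintegral_iUnion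
    (fun a ↦ measurableSet_image_invBranch hN a.2) (pairwise_disjoint_image_invBranch hN)]
  refine tsum_congr fun ⟨a, (ha : (N : ℤ) ≤ a)⟩ ↦ ?_
  have ha' : (0 : ℝ) < a := by exact_mod_cast (Nat.cast_pos.2 hN).trans_le ha
  have hderiv : ∀ u ∈ Ico (0 : ℝ) 1,
      HasDerivWithinAt (invBranch N a) ((N : ℝ) / (a + u) ^ 2) (Ico 0 1) u := fun u hu ↦
    (hasDerivAt_invBranch N (by linarith [hu.1])).hasDerivWithinAt
  rw [lintegral_image_eq_lintegral_abs_deriv_mul measurableSet_Ico hderiv (injOn_invBranch hN a),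
    lintegral_rhoT, ← lintegral_const_mul' _ _ ENNReal.ofReal_ne_top]
  refine setLIntegral_congr_fun measurableSet_Ico fun u hu ↦ ?_
  simp only [← mul_assoc]
  rw [← ENNReal.ofReal_mul (abs_nonneg _), ← ENNReal.ofReal_mul (digitWeight_nonneg ht ha),
    abs_of_nonneg (by positivity), rhoDensity_invBranch hN ht ha hu.1]

theorem lintegral_comp_iterate_RN (hN : 0 < N) (ht : 1 - (N : ℝ) < t) (f : ℝ → ℝ≥0∞) (n : ℕ) :
    ∫⁻ y, f ((RN N)^[n] y) ∂rhoT N t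
      = ∫⁻ y, ∫⁻ z, f z ∂rhoT N (sVar N t y n) ∂rhoT N t := by
  induction n generalizing t with
  | zero =>
    have := isProbabilityMeasure_rhoT hN ht
    simp only [Function.iterate_zero_apply, sVar, lintegral_const, measure_univ, mul_one]
  | succ n ih =>
    rw [lintegral_rhoT_eq_tsum hN ht, lintegral_rhoT_eq_tsum hN ht]
    refine tsum_congr fun ⟨a, ha⟩ ↦ congrArg _ ?_
    calc ∫⁻ u, f ((RN N)^[n + 1] (invBranch N a u)) ∂rhoT N (invBranch N a t)
        = ∫⁻ u, f ((RN N)^[n] u) ∂rhoT N (invBranch N a t) := by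
          refine lintegral_congr_ae ?_
          filter_upwards [ae_rhoT_mem_Ico N (invBranch N a t)] with u hu
          rw [Function.iterate_succ_apply, RN_invBranch hN a hu]
      _ = ∫⁻ u, ∫⁻ z, f z ∂rhoT N (sVar N (invBranch N a t) u n) ∂rhoT N (invBranch N a t) :=
          ih (one_sub_lt_invBranch hN ha ht)
      _ = ∫⁻ u, ∫⁻ z, f z ∂rhoT N (sVar N t (invBranch N a u) (n + 1))
            ∂rhoT N (invBranch N a t) := by
          refine lintegral_congr_ae ?_
          filter_upwards [ae_rhoT_mem_Ico N (invBranch N a t)] with u hu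
          rw [sVar_invBranch_succ hN t a hu]

theorem rhoT_preimage_iterate_RN (hN : 0 < N) (ht : 1 - (N : ℝ) < t) {S : Set ℝ}
    (hS : MeasurableSet S) (n : ℕ) :
    rhoT N t ((RN N)^[n] ⁻¹' S) = ∫⁻ y, rhoT N (sVar N t y n) S ∂rhoT N t := by
  simpa only [lintegral_indicator_one hS, ← indicator_comp_right, Pi.one_comp, Function.comp_apply,
    lintegral_indicator_one ((measurable_RN N).iterate n hS)]
    using lintegral_comp_iterate_RN hN ht (S.indicator 1) n

end ConditionalMeasure

theorem stmt4_general (N : ℕ) (hN : 0 < N) (t : ℝ) (ht : 1 - (N : ℝ) < t)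
    (n : ℕ) (x : ℝ) (hx : x ∈ Set.Icc (0 : ℝ) 1) :
    (rhoT N t {y | y ∈ Set.Icc (0 : ℝ) 1 ∧ (RN N)^[n] y < x}).toReal
      = ∫ y, (N : ℝ) * x / ((N : ℝ) - (1 - x) * (1 - sVar N t y n)) ∂(rhoT N t) := by
  have hs : ∀ᵐ y ∂rhoT N t, 1 - (N : ℝ) < sVar N t y n :=
    (ae_rhoT_mem_Ico N t).mono fun y hy ↦ one_sub_lt_sVar hN ht hy n
  have hset : {y | y ∈ Icc (0 : ℝ) 1 ∧ (RN N)^[n] y < x} =ᵐ[rhoT N t] (RN N)^[n] ⁻¹' Iio x := by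
    filter_upwards [ae_rhoT_mem_Ico N t] with y hy
    exact propext (and_iff_right (Ico_subset_Icc_self hy))
  have hcdf : ∀ᵐ y ∂rhoT N t, rhoT N (sVar N t y n) (Iio x)
      = ENNReal.ofReal ((N : ℝ) * x / (N - (1 - x) * (1 - sVar N t y n))) :=
    hs.mono fun y hy ↦ rhoT_Iio hN hy hx
  rw [measure_congr hset, rhoT_preimage_iterate_RN hN ht measurableSet_Iio,
    lintegral_congr_ae hcdf, integral_eq_lintegral_of_nonneg_ae]
  · filter_upwards [hs] with y hy
    exact div_nonneg (mul_nonneg N.cast_nonneg hx.1) (sub_one_sub_mul_one_sub_pos hN hy hx).le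
  · have := measurable_sVar N t n
    exact Measurable.aestronglyMeasurable (by fun_prop)

theorem stmt4 (N : ℕ) (hN : 2 ≤ N) (t : ℝ) (ht : t ∈ Set.Icc (0 : ℝ) 1)
    (n : ℕ) (hn : 1 ≤ n) (x : ℝ) (hx : x ∈ Set.Icc (0 : ℝ) 1) :
    (rhoT N t {y | y ∈ Set.Icc (0 : ℝ) 1 ∧ (RN N)^[n] y < x}).toReal
      = ∫ y, (N : ℝ) * x / ((N : ℝ) - (1 - x) * (1 - sVar N t y n)) ∂(rhoT N t) := by
  have hN' : (2 : ℝ) ≤ N := by exact_mod_cast hN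
  exact stmt4_general N (by lia) t (by linarith [ht.1]) n x hx
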